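/- Let f₀ : ℝⁿ → ℝ be a nonconstant polynomial function that is bounded from below on ℝⁿ and nondegenerate at infinity, and set f* := inf_{x ∈ ℝⁿ} f₀(x). Then f* = min{c : c ∈ K₀(f₀) ∪ Σ∞(f₀)} = min{c : c ∈ K₀(f₀) ∪ Σ∞'(f₀)}. -/

import Mathlib

open MvPolynomial Set Filter
open scoped Classical

noncomputable section

/-- The exponent vector of a monomial, viewed as a point of `ℝⁿ`. -/
def expVec {n : ℕ} (κ : Fin n →₀ ℕ) : Fin n → ℝ := fun j => (κ j : ℝ)

/-- The Newton polyhedron at infinity `Γ(f)`: the convex hull of the support of `f`. -/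
def NewtonPolyhedron {n : ℕ} (f : MvPolynomial (Fin n) ℝ) : Set (Fin n → ℝ) :=
  convexHull ℝ (expVec '' (f.support : Set (Fin n →₀ ℕ)))

/-- `d(q, Γ(f)) := min {⟨q, κ⟩ : κ ∈ Γ(f)}`. -/
def NewtonD {n : ℕ} (f : MvPolynomial (Fin n) ℝ) (q : Fin n → ℝ) : ℝ :=
  sInf ((fun κ : Fin n → ℝ => ∑ j, q j * κ j) '' NewtonPolyhedron f)

/-- `Δ(q, Γ(f)) := {κ ∈ Γ(f) : ⟨q, κ⟩ = d(q, Γ(f))}`. -/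
def NewtonFace {n : ℕ} (f : MvPolynomial (Fin n) ℝ) (q : Fin n → ℝ) : Set (Fin n → ℝ) :=
  {κ ∈ NewtonPolyhedron f | ∑ j, q j * κ j = NewtonD f q}

/-- For a set `Δ ⊆ ℝⁿ`, the polynomial `f_Δ := ∑_{κ ∈ Δ} a_κ x^κ`. -/
def facePoly {n : ℕ} (f : MvPolynomial (Fin n) ℝ) (Δ : Set (Fin n → ℝ)) :
    MvPolynomial (Fin n) ℝ :=
  ∑ κ ∈ f.support.filter (fun κ => expVec κ ∈ Δ), monomial κ (f.coeff κ)

/-- `ℝ^J := {x ∈ ℝⁿ : x_j = 0 for all j ∉ J}`. -/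
def RJ {n : ℕ} (J : Set (Fin n)) : Set (Fin n → ℝ) := {x | ∀ j ∉ J, x j = 0}

/-- The restriction of `f` to `ℝ^J` is not constant. -/
def NotConstOn {n : ℕ} (f : MvPolynomial (Fin n) ℝ) (J : Set (Fin n)) : Prop :=
  ∃ x ∈ RJ J, ∃ y ∈ RJ J, eval x f ≠ eval y f

/-- The Mangasarian–Fromovitz property at infinity for `inf {f 0 x : f i x ≤ 0, i = 1,…,p}`. -/
def MFinfty {n p : ℕ} (f : Fin (p + 1) → MvPolynomial (Fin n) ℝ) : Prop :=
  ∀ J : Set (Fin n), J.Nonempty → ∀ q x : Fin n → ℝ,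
    NewtonD (f 0) q < 0 →
    (∀ i, NotConstOn (f i) J → NewtonFace (f i) q ⊆ RJ J) →
    (∀ j, x j = 0 ↔ j ∉ J) →
    (∀ i, i ≠ 0 → eval x (facePoly (f i) (NewtonFace (f i) q)) ≤ 0) →
    ∃ v : Fin n → ℝ, v ≠ 0 ∧ ∀ i, NotConstOn (f i) J →
      eval x (facePoly (f i) (NewtonFace (f i) q)) = 0 →
      ∑ j, eval x (pderiv j (facePoly (f i) (NewtonFace (f i) q))) * v j < 0

/-- Kouchnirenko non-degeneracy at infinity. -/
def NondegenerateAtInfinity {n : ℕ} (f : MvPolynomial (Fin n) ℝ) : Prop :=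
  ∀ q : Fin n → ℝ, NewtonD f q < 0 →
    ∀ x : Fin n → ℝ, (∀ j, x j ≠ 0) →
      ¬ ∀ j, eval x (pderiv j (facePoly f (NewtonFace f q))) = 0

/-- A convenient polynomial. -/
def Convenient {n : ℕ} (f : MvPolynomial (Fin n) ℝ) : Prop :=
  ∀ j : Fin n, ∃ c : ℝ, 0 < c ∧ c • (Pi.single j 1 : Fin n → ℝ) ∈ NewtonPolyhedron f

/-- A bad face of `Γ(f)`. -/
def BadFace {n : ℕ} (f : MvPolynomial (Fin n) ℝ) (Δ : Set (Fin n → ℝ)) : Prop :=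
  (∃ q : Fin n → ℝ, Δ = NewtonFace f q) ∧
  (0 : Fin n → ℝ) ∈ affineSpan ℝ Δ ∧
  ∃ q : Fin n → ℝ, (∃ i j, q i * q j < 0) ∧
    {κ : Fin n → ℝ | ∑ j, q j * κ j = 0} ∩ NewtonPolyhedron f = Δ

/-- The set of critical values of `f`. -/
def K0 {n : ℕ} (f : MvPolynomial (Fin n) ℝ) : Set ℝ :=
  {c | ∃ x : Fin n → ℝ, (∀ j, eval x (pderiv j f) = 0) ∧ eval x f = c}

/-- `Σ∞(f)`: critical values of `f_Δ` over all bad faces `Δ`. -/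
def SigmaInfty {n : ℕ} (f : MvPolynomial (Fin n) ℝ) : Set ℝ :=
  {c | ∃ Δ : Set (Fin n → ℝ), BadFace f Δ ∧ ∃ x : Fin n → ℝ,
    (∀ j, eval x (pderiv j (facePoly f Δ)) = 0) ∧ eval x (facePoly f Δ) = c}

/-- `Σ∞'(f)`: critical values of `f_Δ` on `(ℝ ∖ {0})ⁿ` over all bad faces `Δ`. -/
def SigmaInfty' {n : ℕ} (f : MvPolynomial (Fin n) ℝ) : Set ℝ :=
  {c | ∃ Δ : Set (Fin n → ℝ), BadFace f Δ ∧ ∃ x : Fin n → ℝ, (∀ j, x j ≠ 0) ∧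
    (∀ j, eval x (pderiv j (facePoly f Δ)) = 0) ∧ eval x (facePoly f Δ) = c}

/-- The Euclidean norm on `Fin k → ℝ`. -/
def euclNorm {k : ℕ} (x : Fin k → ℝ) : ℝ := Real.sqrt (∑ j, (x j) ^ 2)

/-- Basic semialgebraic subsets of `ℝ^m`. -/
def BasicSA {m : ℕ} (A : Set (Fin m → ℝ)) : Prop :=
  ∃ (k l : ℕ) (g : Fin k → MvPolynomial (Fin m) ℝ) (h : Fin l → MvPolynomial (Fin m) ℝ),
    A = {x | (∀ i, eval x (g i) = 0) ∧ ∀ i, 0 < eval x (h i)}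

/-- Semialgebraic subsets of `ℝ^m`: finite unions of basic semialgebraic sets. -/
def IsSA {m : ℕ} (A : Set (Fin m → ℝ)) : Prop :=
  ∃ (N : ℕ) (B : Fin N → Set (Fin m → ℝ)), (∀ i, BasicSA (B i)) ∧ A = ⋃ i, B i

/-- A semialgebraic scalar function on a domain `D ⊆ ℝ` (graph is semialgebraic). -/
def IsSAFunOn (D : Set ℝ) (f : ℝ → ℝ) : Prop :=
  IsSA {z : Fin 2 → ℝ | z 0 ∈ D ∧ z 1 = f (z 0)}

/-- A semialgebraic curve `D → ℝⁿ` (graph is semialgebraic). -/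
def IsSACurve {n : ℕ} (D : Set ℝ) (φ : ℝ → Fin n → ℝ) : Prop :=
  IsSA {z : Fin (n + 1) → ℝ | z 0 ∈ D ∧ ∀ j : Fin n, z j.succ = φ (z 0) j}

/-- A semialgebraic map `ℝⁿ → ℝ^p` (graph is semialgebraic). -/
def IsSAMap {n p : ℕ} (F : (Fin n → ℝ) → (Fin p → ℝ)) : Prop :=
  IsSA {z : Fin (n + p) → ℝ |
    (fun i : Fin p => z (Fin.natAdd n i)) = F (fun j : Fin n => z (Fin.castAdd p j))}

open scoped Matrix Topology

/-- The part of `f` supported on `S`. -/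
def subPoly {n : ℕ} (f : MvPolynomial (Fin n) ℝ) (S : Finset (Fin n →₀ ℕ)) :
    MvPolynomial (Fin n) ℝ := ∑ κ ∈ S, monomial κ (f.coeff κ)

lemma subPoly_support {n : ℕ} (f : MvPolynomial (Fin n) ℝ) : subPoly f f.support = f :=
  support_sum_monomial_coeff f

lemma eval_subPoly {n : ℕ} (f : MvPolynomial (Fin n) ℝ) (S : Finset (Fin n →₀ ℕ))
    (s u : Fin n → ℝ) :
    eval (fun j => s j * Real.exp (u j)) (subPoly f S)
      = ∑ κ ∈ S, (f.coeff κ * ∏ j, s j ^ κ j) * Real.exp (u ⬝ᵥ expVec κ) := by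
  unfold subPoly
  rw [map_sum]
  refine Finset.sum_congr rfl fun κ _ => ?_
  rw [eval_monomial, Finsupp.prod_fintype _ _ (by simp), mul_assoc]
  congr 1
  simp only [mul_pow, Finset.prod_mul_distrib, dotProduct, Real.exp_sum, expVec]
  congr 1
  refine Finset.prod_congr rfl fun j _ => ?_
  rw [mul_comm (u j), Real.exp_nat_mul]

lemma eval_pderiv_subPoly {n : ℕ} (f : MvPolynomial (Fin n) ℝ) (S : Finset (Fin n →₀ ℕ))
    (s u : Fin n → ℝ) (j : Fin n) :
    (s j * Real.exp (u j)) * eval (fun j => s j * Real.exp (u j)) (pderiv j (subPoly f S))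
      = ∑ κ ∈ S, ((κ j : ℝ) * (f.coeff κ * ∏ j, s j ^ κ j)) * Real.exp (u ⬝ᵥ expVec κ) := by
  have h1 : (s j * Real.exp (u j)) * eval (fun j => s j * Real.exp (u j)) (pderiv j (subPoly f S))
      = eval (fun j => s j * Real.exp (u j)) (X j * pderiv j (subPoly f S)) := by simp
  rw [h1]
  unfold subPoly
  rw [map_sum, Finset.mul_sum, map_sum]
  refine Finset.sum_congr rfl fun κ _ => ?_
  rw [X_mul_pderiv_monomial, map_nsmul, nsmul_eq_mul]
  have := eval_subPoly f {κ} s u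
  simp only [subPoly, Finset.sum_singleton] at this
  rw [this]; ring

lemma expVec_mem {n : ℕ} {f : MvPolynomial (Fin n) ℝ} {κ : Fin n →₀ ℕ} (h : κ ∈ f.support) :
    expVec κ ∈ NewtonPolyhedron f :=
  subset_convexHull _ _ ⟨κ, h, rfl⟩

lemma le_on_hull {n : ℕ} {f : MvPolynomial (Fin n) ℝ} {q : Fin n → ℝ} {c : ℝ}
    (h : ∀ κ ∈ f.support, c ≤ q ⬝ᵥ expVec κ) {z : Fin n → ℝ} (hz : z ∈ NewtonPolyhedron f) :
    c ≤ q ⬝ᵥ z := by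
  have hc : Convex ℝ {z : Fin n → ℝ | c ≤ q ⬝ᵥ z} := by
    refine convex_halfSpace_ge (f := fun z => q ⬝ᵥ z) ⟨?_, ?_⟩ c
    · intro x y; exact dotProduct_add _ _ _
    · intro a x; exact dotProduct_smul _ _ _
  refine convexHull_min ?_ hc hz
  rintro _ ⟨κ, hκ, rfl⟩
  exact h κ hκ

/-- If `⟨q, ·⟩ = c` on `S` and `> c` on the rest of the support, then `q` cuts out `S`. -/
lemma face_of {n : ℕ} {f : MvPolynomial (Fin n) ℝ} {q : Fin n → ℝ} {c : ℝ}
    {S : Finset (Fin n →₀ ℕ)} (hS : S ⊆ f.support) (hne : S.Nonempty)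
    (h1 : ∀ κ ∈ S, q ⬝ᵥ expVec κ = c)
    (h2 : ∀ κ ∈ f.support, κ ∉ S → c < q ⬝ᵥ expVec κ) :
    NewtonD f q = c ∧ facePoly f (NewtonFace f q) = subPoly f S := by
  have hle : ∀ κ ∈ f.support, c ≤ q ⬝ᵥ expVec κ := by
    intro κ hκ
    by_cases hs : κ ∈ S
    · exact (h1 κ hs).ge
    · exact (h2 κ hκ hs).le
  have hD : NewtonD f q = c := by
    obtain ⟨κ, hκ⟩ := hne
    refine IsLeast.csInf_eq ⟨⟨expVec κ, expVec_mem (hS hκ), h1 κ hκ⟩, ?_⟩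
    rintro _ ⟨z, hz, rfl⟩
    exact le_on_hull hle hz
  refine ⟨hD, ?_⟩
  unfold facePoly subPoly
  congr 1
  ext κ
  simp only [Finset.mem_filter]
  constructor
  · rintro ⟨hκ, -, h⟩
    by_contra hs
    have := h2 κ hκ hs
    rw [hD] at h
    exact absurd h this.ne'
  · intro hs
    exact ⟨hS hs, expVec_mem (hS hs), (h1 κ hs).trans hD.symm⟩

lemma extract {n : ℕ} {α : Type*} (T : Finset α) (e : α → Fin n → ℝ) (u : ℕ → Fin n → ℝ) (C : ℝ)
    (hC : ∀ k, ∀ κ ∈ T, u k ⬝ᵥ e κ ≤ C) :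
    ∃ φ : ℕ → ℕ, StrictMono φ ∧ ∃ S ⊆ T, ∃ v : Fin n → ℝ, ∃ w : ℕ → Fin n → ℝ,
      (∀ c : α → ℝ, Tendsto (fun k => ∑ κ ∈ T, c κ * Real.exp (u (φ k) ⬝ᵥ e κ)) atTop
        (𝓝 (∑ κ ∈ S, c κ * Real.exp (v ⬝ᵥ e κ)))) ∧
      (∀ κ ∈ S, ∀ k, w k ⬝ᵥ e κ = 0) ∧
      (∀ κ ∈ T, κ ∉ S → Tendsto (fun k => w k ⬝ᵥ e κ) atTop atBot) ∧
      Tendsto (fun k => u (φ k) - w k) atTop (𝓝 v) := by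
  have hcpt : IsCompact (Set.pi univ (fun _ : T => Set.Icc (0 : ℝ) (Real.exp C))) :=
    isCompact_univ_pi fun _ => isCompact_Icc
  obtain ⟨y, -, φ, hφ, hy⟩ := hcpt.tendsto_subseq
    (x := fun k (κ : T) => Real.exp (u k ⬝ᵥ e κ)) (fun k κ _ =>
      ⟨(Real.exp_pos _).le, Real.exp_le_exp.2 (hC k κ κ.2)⟩)
  rw [tendsto_pi_nhds] at hy
  have hy0 : ∀ κ, 0 ≤ y κ := fun κ =>
    ge_of_tendsto' (hy κ) fun k => (Real.exp_pos _).le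
  -- the linear map
  let S : Finset α := T.filter fun κ => ∃ h : κ ∈ T, y ⟨κ, h⟩ ≠ 0
  have hST : S ⊆ T := Finset.filter_subset _ _
  have hpos : ∀ κ (h : κ ∈ S), y ⟨κ, hST h⟩ ≠ 0 := by
    intro κ h
    obtain ⟨_, _, h'⟩ := Finset.mem_filter.1 h
    exact h'
  have hzero : ∀ κ (h : κ ∈ T), κ ∉ S → y ⟨κ, h⟩ = 0 := by
    intro κ h hs
    by_contra h'
    exact hs (Finset.mem_filter.2 ⟨h, h, h'⟩)
  let L : (Fin n → ℝ) →ₗ[ℝ] (S → ℝ) :=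
    { toFun := fun u κ => u ⬝ᵥ e κ
      map_add' := fun a b => by ext κ; simp [add_dotProduct]
      map_smul' := fun a b => by ext κ; simp [smul_dotProduct] }
  obtain ⟨g, hg⟩ := L.rangeRestrict.exists_rightInverse_of_surjective
    (LinearMap.range_eq_top.2 L.surjective_rangeRestrict)
  obtain ⟨g', hg'⟩ := LinearMap.exists_extend g
  have hL : ∀ a, L (g' (L a)) = L a := by
    intro a
    have e1 : g' (L a) = g (L.rangeRestrict a) := by
      rw [← hg']; rfl
    have e2 := LinearMap.congr_fun hg (L.rangeRestrict a)
    rw [e1]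
    exact congrArg Subtype.val e2
  have hg'c : Continuous g' := g'.continuous_of_finiteDimensional
  have hLlim : Tendsto (fun k => L (u (φ k))) atTop (𝓝 (fun κ : S => Real.log (y ⟨κ, hST κ.2⟩))) := by
    rw [tendsto_pi_nhds]
    intro κ
    have := (hy ⟨κ, hST κ.2⟩).log (hpos κ κ.2)
    simpa [L] using this
  have hv := (hg'c.tendsto _).comp hLlim
  set v := g' (fun κ : S => Real.log (y ⟨κ, hST κ.2⟩)) with hvdef
  have hdot : ∀ a : Fin n → ℝ, Continuous fun z : Fin n → ℝ => z ⬝ᵥ a := by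
    intro a; unfold dotProduct; fun_prop
  have hvk : ∀ κ ∈ S, ∀ k, (g' (L (u (φ k)))) ⬝ᵥ e κ = u (φ k) ⬝ᵥ e κ := by
    intro κ hκ k
    exact congrFun (hL (u (φ k))) ⟨κ, hκ⟩
  refine ⟨φ, hφ, S, hST, v, fun k => u (φ k) - g' (L (u (φ k))), ?_, ?_, ?_, ?_⟩
  · intro c
    have e1 : ∑ κ ∈ S, c κ * Real.exp (v ⬝ᵥ e κ)
        = ∑ κ ∈ T, if κ ∈ S then c κ * Real.exp (v ⬝ᵥ e κ) else 0 := by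
      rw [← Finset.sum_filter, Finset.filter_mem_eq_inter, Finset.inter_eq_right.2 hST]
    rw [e1]
    refine tendsto_finsetSum _ fun κ hκ => ?_
    by_cases hs : κ ∈ S
    · rw [if_pos hs]
      refine Tendsto.const_mul _ ?_
      have := ((hdot (e κ)).tendsto _).comp hv
      refine ((Real.continuous_exp.tendsto _).comp this).congr fun k => ?_
      simp only [Function.comp]
      rw [hvk κ hs]
    · rw [if_neg hs]
      have := (hy ⟨κ, hκ⟩).const_mul (c κ)
      rw [hzero κ hκ hs, mul_zero] at this
      exact this
  · intro κ hκ k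
    rw [sub_dotProduct, hvk κ hκ k, sub_self]
  · intro κ hκ hs
    have h1 := hy ⟨κ, hκ⟩
    rw [hzero κ hκ hs] at h1
    have h2 : Tendsto (fun k => u (φ k) ⬝ᵥ e κ) atTop atBot :=
      Real.tendsto_exp_comp_nhds_zero.1 h1
    have h3 := (((hdot (e κ)).tendsto _).comp hv).neg
    refine (h2.atBot_add h3).congr fun k => ?_
    simp [sub_eq_add_neg]
  · simp only [sub_sub_cancel]
    exact hv

/-- Palais-Smale type sequence for an exponential sum, by quadratic penalization. -/
lemma exists_seq {n : ℕ} {α : Type*} (T : Finset α) (e : α → Fin n → ℝ) (b : α → ℝ) (m : ℝ)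
    (hm : IsGLB (Set.range fun u : Fin n → ℝ => ∑ κ ∈ T, b κ * Real.exp (u ⬝ᵥ e κ)) m) :
    ∃ u : ℕ → Fin n → ℝ,
      Tendsto (fun k => ∑ κ ∈ T, b κ * Real.exp (u k ⬝ᵥ e κ)) atTop (𝓝 m) ∧
      ∀ j, Tendsto (fun k => ∑ κ ∈ T, (e κ j * b κ) * Real.exp (u k ⬝ᵥ e κ)) atTop (𝓝 0) := by
  set F : (Fin n → ℝ) → ℝ := fun u => ∑ κ ∈ T, b κ * Real.exp (u ⬝ᵥ e κ) with hF
  have hFm : ∀ u, m ≤ F u := fun u => hm.1 ⟨u, rfl⟩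
  have hdot : ∀ a : Fin n → ℝ, Continuous fun z : Fin n → ℝ => z ⬝ᵥ a := by
    intro a; unfold dotProduct; fun_prop
  have hFc : Continuous F := by
    refine continuous_finsetSum _ fun κ _ => ?_
    exact continuous_const.mul (Real.continuous_exp.comp (hdot _))
  have hN : ∀ u : Fin n → ℝ, ‖u‖ ^ 2 ≤ ∑ j, u j ^ 2 := by
    intro u
    have : ‖u‖ ≤ Real.sqrt (∑ j, u j ^ 2) := by
      rw [pi_norm_le_iff_of_nonneg (Real.sqrt_nonneg _)]
      intro j
      rw [Real.norm_eq_abs, ← Real.sqrt_sq_eq_abs]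
      exact Real.sqrt_le_sqrt (Finset.single_le_sum (f := fun j => u j ^ 2)
        (fun i _ => sq_nonneg _) (Finset.mem_univ j))
    calc ‖u‖ ^ 2 ≤ Real.sqrt (∑ j, u j ^ 2) ^ 2 := by gcongr
      _ = _ := Real.sq_sqrt (Finset.sum_nonneg fun i _ => sq_nonneg _)
  have key : ∀ k : ℕ, ∃ u : Fin n → ℝ, ∀ z, F u + (1 / ((k : ℝ) + 1)) * ∑ j, u j ^ 2
      ≤ F z + (1 / ((k : ℝ) + 1)) * ∑ j, z j ^ 2 := by
    intro k
    have hk : (0 : ℝ) < 1 / ((k : ℝ) + 1) := Nat.one_div_pos_of_nat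
    have hcont : Continuous fun u : Fin n → ℝ => F u + (1 / ((k : ℝ) + 1)) * ∑ j, u j ^ 2 := by
      fun_prop
    refine hcont.exists_forall_le ?_
    have h1 : Tendsto (fun u : Fin n → ℝ => m + (1 / ((k : ℝ) + 1)) * ‖u‖ ^ 2)
        (cocompact _) atTop := by
      refine tendsto_atTop_add_const_left _ _ (Tendsto.const_mul_atTop hk ?_)
      exact (tendsto_pow_atTop two_ne_zero).comp (tendsto_norm_cocompact_atTop (E := Fin n → ℝ))
    refine tendsto_atTop_mono (fun u => ?_) h1
    exact add_le_add (hFm u) (mul_le_mul_of_nonneg_left (hN u) hk.le)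
  choose u hu using key
  have hε : Tendsto (fun k : ℕ => 1 / ((k : ℝ) + 1)) atTop (𝓝 0) :=
    tendsto_one_div_add_atTop_nhds_zero_nat
  have hεpos : ∀ k : ℕ, (0 : ℝ) < 1 / ((k : ℝ) + 1) := fun k => Nat.one_div_pos_of_nat
  -- the penalized value tends to m
  have hval : Tendsto (fun k : ℕ => F (u k) + (1 / ((k : ℝ) + 1)) * ∑ j, u k j ^ 2) atTop (𝓝 m) := by
    rw [tendsto_order]
    constructor
    · intro a ha
      refine Eventually.of_forall fun k => ?_
      have h1 : 0 ≤ (1 / ((k : ℝ) + 1)) * ∑ j, u k j ^ 2 :=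
        mul_nonneg (hεpos k).le (Finset.sum_nonneg fun i _ => sq_nonneg _)
      have := hFm (u k)
      linarith
    · intro a ha
      obtain ⟨_, ⟨z, rfl⟩, hz⟩ := (isGLB_lt_iff hm).1 ha
      have h1 : Tendsto (fun k : ℕ => F z + (1 / ((k : ℝ) + 1)) * ∑ j, z j ^ 2) atTop
          (𝓝 (F z + 0 * ∑ j, z j ^ 2)) := (hε.mul_const _).const_add _
      rw [zero_mul, add_zero] at h1
      filter_upwards [h1.eventually_lt_const hz] with k hk
      exact (hu k z).trans_lt hk
  have hpen : ∀ k : ℕ, 0 ≤ (1 / ((k : ℝ) + 1)) * ∑ j, u k j ^ 2 := fun k =>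
    mul_nonneg (hεpos k).le (Finset.sum_nonneg fun i _ => sq_nonneg _)
  have hFu : Tendsto (fun k => F (u k)) atTop (𝓝 m) :=
    tendsto_of_tendsto_of_tendsto_of_le_of_le tendsto_const_nhds hval (fun k => hFm _)
      (fun k => by have := hpen k; simp only; linarith)
  have hpen0 : Tendsto (fun k : ℕ => (1 / ((k : ℝ) + 1)) * ∑ j, u k j ^ 2) atTop (𝓝 0) := by
    have := hval.sub hFu
    simpa using this
  refine ⟨u, hFu, fun j => ?_⟩
  have hgrad : ∀ k, ∑ κ ∈ T, (e κ j * b κ) * Real.exp (u k ⬝ᵥ e κ)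
      = - (2 * ((1 / ((k : ℝ) + 1)) * u k j)) := by
    intro k
    set ε := 1 / ((k : ℝ) + 1) with hεdef
    have hd : HasDerivAt (fun t : ℝ =>
        (∑ κ ∈ T, b κ * Real.exp (u k ⬝ᵥ e κ + t * e κ j)) +
          ε * (∑ i, u k i ^ 2 + 2 * t * u k j + t ^ 2))
        ((∑ κ ∈ T, b κ * (Real.exp (u k ⬝ᵥ e κ + 0 * e κ j) * (1 * e κ j))) +
          ε * ((2 * 1) * u k j + 2 * 0)) 0 := by
      refine HasDerivAt.add (HasDerivAt.fun_sum fun κ _ => ?_) ?_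
      · exact (((hasDerivAt_id (0 : ℝ)).mul_const _).const_add _).exp.const_mul _
      · refine HasDerivAt.const_mul _ (HasDerivAt.add ?_ ?_)
        · exact (((hasDerivAt_id (0 : ℝ)).const_mul 2).mul_const _).const_add _
        · simpa using hasDerivAt_pow 2 (0 : ℝ)
    have hmin : IsLocalMin (fun t : ℝ =>
        (∑ κ ∈ T, b κ * Real.exp (u k ⬝ᵥ e κ + t * e κ j)) +
          ε * (∑ i, u k i ^ 2 + 2 * t * u k j + t ^ 2)) 0 := by
      refine Eventually.of_forall fun t => ?_
      have h := hu k (u k + Pi.single j t)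
      have e1 : F (u k + Pi.single j t) = ∑ κ ∈ T, b κ * Real.exp (u k ⬝ᵥ e κ + t * e κ j) := by
        simp [hF, add_dotProduct]
      have e2 : ∑ i, (u k + (Pi.single j t : Fin n → ℝ)) i ^ 2 = ∑ i, u k i ^ 2 + 2 * t * u k j + t ^ 2 := by
        have : ∀ i, (u k + (Pi.single j t : Fin n → ℝ)) i ^ 2
            = u k i ^ 2 + (2 * u k i + t) * (Pi.single j t : Fin n → ℝ) i := by
          intro i
          by_cases hi : i = j
          · subst hi; simp; ring
          · simp [hi]
        simp_rw [this, Finset.sum_add_distrib]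
        have h3 : ∑ i, (2 * u k i + t) * (Pi.single j t : Fin n → ℝ) i = (2 * u k j + t) * t := by
          rw [Finset.sum_eq_single j] <;> simp +contextual
        rw [h3]; ring
      rw [e1, e2] at h
      simpa [hF, hεdef] using h
    have h0 := hmin.hasDerivAt_eq_zero hd
    have e3 : ∑ κ ∈ T, b κ * (Real.exp (u k ⬝ᵥ e κ + 0 * e κ j) * (1 * e κ j))
        = ∑ κ ∈ T, (e κ j * b κ) * Real.exp (u k ⬝ᵥ e κ) := by
      refine Finset.sum_congr rfl fun κ _ => ?_
      rw [zero_mul, add_zero]; ring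
    rw [e3] at h0
    linarith
  simp_rw [hgrad]
  have hsq : Tendsto (fun k : ℕ => ((1 / ((k : ℝ) + 1)) * u k j) ^ 2) atTop (𝓝 0) := by
    have h2 := hε.mul hpen0
    rw [mul_zero] at h2
    refine squeeze_zero (fun k => sq_nonneg _) (fun k => ?_) h2
    have := Finset.single_le_sum (f := fun j => u k j ^ 2)
        (fun i _ => sq_nonneg _) (Finset.mem_univ j)
    have h3 := mul_le_mul_of_nonneg_left this (mul_nonneg (hεpos k).le (hεpos k).le)
    calc _ = 1 / ((k : ℝ) + 1) * (1 / ((k : ℝ) + 1)) * u k j ^ 2 := by ring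
      _ ≤ _ := h3
      _ = _ := by ring
  have h4 : Tendsto (fun k : ℕ => (1 / ((k : ℝ) + 1)) * u k j) atTop (𝓝 0) := by
    have := hsq.sqrt
    simp only [Real.sqrt_sq_eq_abs, Real.sqrt_zero] at this
    exact (tendsto_zero_iff_abs_tendsto_zero _).2 this
  have := (h4.const_mul 2).neg
  simpa using this

/-- A minimizer is a critical point. -/
lemma crit_of_min {n : ℕ} (g : MvPolynomial (Fin n) ℝ) (x : Fin n → ℝ)
    (h : ∀ y, eval x g ≤ eval y g) (j : Fin n) : eval x (pderiv j g) = 0 := by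
  have hd : ∀ g : MvPolynomial (Fin n) ℝ, HasDerivAt
      (fun t : ℝ => eval (x + (Pi.single j t : Fin n → ℝ)) g) (eval x (pderiv j g)) 0 := by
    intro g
    induction g using MvPolynomial.induction_on with
    | C a => simpa using hasDerivAt_const (0 : ℝ) a
    | add p q hp hq => simpa using hp.fun_add hq
    | mul_X p i hp =>
      have hX : HasDerivAt (fun t : ℝ => x i + (Pi.single j t : Fin n → ℝ) i)
          (eval x (pderiv j (X i))) 0 := by
        by_cases hi : i = j
        · subst hi
          simpa using (hasDerivAt_id (0 : ℝ)).const_add (x i)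
        · rw [pderiv_X_of_ne hi]
          simpa [hi] using hasDerivAt_const (0 : ℝ) (x i)
      have hmul := hp.fun_mul hX
      rw [pderiv_mul]
      simpa using hmul
  have hmin : IsLocalMin (fun t : ℝ => eval (x + (Pi.single j t : Fin n → ℝ)) g) 0 := by
    refine Eventually.of_forall fun t => ?_
    simpa using h (x + (Pi.single j t : Fin n → ℝ))
  exact hmin.hasDerivAt_eq_zero (hd g)

/-- `f_S ≥ fstar` whenever `S` is the zero set on the support of some `q ≥ 0` on the support. -/
lemma le_sub {n : ℕ} (f : MvPolynomial (Fin n) ℝ) (m : ℝ) (hm : ∀ x, m ≤ eval x f)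
    (q : Fin n → ℝ) (S : Finset (Fin n →₀ ℕ)) (hS : S ⊆ f.support)
    (h1 : ∀ κ ∈ S, q ⬝ᵥ expVec κ = 0)
    (h2 : ∀ κ ∈ f.support, κ ∉ S → 0 < q ⬝ᵥ expVec κ) (x : Fin n → ℝ) :
    m ≤ eval x (subPoly f S) := by
  have hx : ∀ r : ℝ, m ≤ ∑ κ ∈ f.support,
      (f.coeff κ * ∏ j, x j ^ κ j) * Real.exp (-r * (q ⬝ᵥ expVec κ)) := by
    intro r
    have h := hm (fun j => x j * Real.exp ((-r • q) j))
    conv at h => rhs; rw [← subPoly_support f]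
    rw [eval_subPoly] at h
    simpa [smul_dotProduct] using h
  have hlim : Tendsto (fun r : ℝ => ∑ κ ∈ f.support,
      (f.coeff κ * ∏ j, x j ^ κ j) * Real.exp (-r * (q ⬝ᵥ expVec κ))) atTop
      (𝓝 (eval x (subPoly f S))) := by
    have e0 := eval_subPoly f S x 0
    simp only [Pi.zero_apply, Real.exp_zero, mul_one, zero_dotProduct] at e0
    have e1 : ∑ κ ∈ S, (f.coeff κ * ∏ j, x j ^ κ j)
        = ∑ κ ∈ f.support, if κ ∈ S then (f.coeff κ * ∏ j, x j ^ κ j) else 0 := by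
      rw [← Finset.sum_filter, Finset.filter_mem_eq_inter, Finset.inter_eq_right.2 hS]
    rw [e0, e1]
    refine tendsto_finsetSum _ fun κ hκ => ?_
    by_cases hs : κ ∈ S
    · rw [if_pos hs]
      simp [h1 κ hs]
    · rw [if_neg hs]
      have h3 : Tendsto (fun r : ℝ => -r * (q ⬝ᵥ expVec κ)) atTop atBot :=
        tendsto_neg_atTop_atBot.atBot_mul_const (h2 κ hκ hs)
      simpa using (Real.tendsto_exp_atBot.comp h3).const_mul (f.coeff κ * ∏ j, x j ^ κ j)
  exact ge_of_tendsto' hlim hx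

/-- Bad faces are cut out by supporting hyperplanes through the origin. -/
lemma bad_le {n : ℕ} (f : MvPolynomial (Fin n) ℝ) (m : ℝ) (hm : ∀ x, m ≤ eval x f)
    (Δ : Set (Fin n → ℝ)) (hΔ : BadFace f Δ) (x : Fin n → ℝ) : m ≤ eval x (facePoly f Δ) := by
  obtain ⟨⟨p, hp⟩, -, q, -, hq⟩ := hΔ
  have hmem : ∀ z ∈ NewtonPolyhedron f, (z ∈ Δ ↔ q ⬝ᵥ z = 0) := by
    intro z hz
    rw [← hq]
    exact ⟨fun h => h.1, fun h => ⟨h, hz⟩⟩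
  have hD : ∀ z ∈ NewtonPolyhedron f, NewtonD f p ≤ p ⬝ᵥ z := by
    intro z hz
    refine csInf_le ?_ ⟨z, hz, rfl⟩
    obtain ⟨B, hB⟩ := (f.support.image fun κ => p ⬝ᵥ expVec κ).bddBelow
    refine ⟨B, ?_⟩
    rintro _ ⟨y, hy, rfl⟩
    exact le_on_hull (fun κ hκ => hB (by simpa using ⟨κ, by simpa using hκ, rfl⟩)) hy
  have hside : ∀ κ₁ ∈ f.support, ∀ κ₂ ∈ f.support,
      ¬ (q ⬝ᵥ expVec κ₁ < 0 ∧ 0 < q ⬝ᵥ expVec κ₂) := by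
    rintro κ₁ h₁ κ₂ h₂ ⟨ha, hb⟩
    set A := q ⬝ᵥ expVec κ₁
    set B := q ⬝ᵥ expVec κ₂
    have hpos : 0 < B - A := by linarith
    set z : Fin n → ℝ := (B / (B - A)) • expVec κ₁ + (-A / (B - A)) • expVec κ₂ with hz
    have w1 : 0 < B / (B - A) := div_pos hb hpos
    have w2 : 0 < -A / (B - A) := div_pos (by linarith) hpos
    have w12 : B / (B - A) + -A / (B - A) = 1 := by field_simp; ring
    have hzm : z ∈ NewtonPolyhedron f :=
      (convex_convexHull ℝ _) (expVec_mem h₁) (expVec_mem h₂) w1.le w2.le w12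
    have hz0 : q ⬝ᵥ z = 0 := by
      rw [hz, dotProduct_add, dotProduct_smul, dotProduct_smul]
      simp only [smul_eq_mul]
      change B / (B - A) * A + -A / (B - A) * B = 0
      field_simp; ring
    have hzΔ := (hmem z hzm).2 hz0
    rw [hp] at hzΔ
    have hzp : p ⬝ᵥ z = NewtonD f p := hzΔ.2
    rw [hz, dotProduct_add, dotProduct_smul, dotProduct_smul] at hzp
    simp only [smul_eq_mul] at hzp
    have g1 := hD _ (expVec_mem h₁)
    have g2 := hD _ (expVec_mem h₂)
    have g3 : p ⬝ᵥ expVec κ₁ = NewtonD f p := by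
      refine le_antisymm ?_ g1
      by_contra hlt
      push Not at hlt
      have k1 := mul_lt_mul_of_pos_left hlt w1
      have k2 := mul_le_mul_of_nonneg_left g2 w2.le
      have k3 : B / (B - A) * NewtonD f p + -A / (B - A) * NewtonD f p = NewtonD f p := by
        rw [← add_mul, w12, one_mul]
      linarith
    have : expVec κ₁ ∈ Δ := by rw [hp]; exact ⟨expVec_mem h₁, g3⟩
    have := (hmem _ (expVec_mem h₁)).1 this
    exact ha.ne this
  have hfp : facePoly f Δ = subPoly f (f.support.filter fun κ => expVec κ ∈ Δ) := rfl
  rw [hfp]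
  by_cases hneg : ∃ κ₁ ∈ f.support, q ⬝ᵥ expVec κ₁ < 0
  · obtain ⟨κ₁, h₁, h₁'⟩ := hneg
    refine le_sub f m hm (-q) _ (Finset.filter_subset _ _) ?_ ?_ x
    · intro κ hκ
      obtain ⟨a, b⟩ := Finset.mem_filter.1 hκ
      rw [neg_dotProduct, (hmem _ (expVec_mem a)).1 b, neg_zero]
    · intro κ hκ hn
      have hne : q ⬝ᵥ expVec κ ≠ 0 := fun h =>
        hn (Finset.mem_filter.2 ⟨hκ, (hmem _ (expVec_mem hκ)).2 h⟩)
      have := hside κ₁ h₁ κ hκ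
      rw [neg_dotProduct]
      rcases lt_or_gt_of_ne hne with h | h
      · linarith
      · exact absurd ⟨h₁', h⟩ this
  · push Not at hneg
    refine le_sub f m hm q _ (Finset.filter_subset _ _) ?_ ?_ x
    · intro κ hκ
      obtain ⟨a, b⟩ := Finset.mem_filter.1 hκ
      exact (hmem _ (expVec_mem a)).1 b
    · intro κ hκ hn
      have hne : q ⬝ᵥ expVec κ ≠ 0 := fun h =>
        hn (Finset.mem_filter.2 ⟨hκ, (hmem _ (expVec_mem hκ)).2 h⟩)
      exact lt_of_le_of_ne (hneg κ hκ) hne.symm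

/-- A critical face through a supporting hyperplane at the origin spans the origin. -/
lemma zero_mem_span {n : ℕ} (f : MvPolynomial (Fin n) ℝ) (hnd : NondegenerateAtInfinity f)
    (q : Fin n → ℝ) (S : Finset (Fin n →₀ ℕ)) (hS : S ⊆ f.support) (hne : S.Nonempty)
    (h1 : ∀ κ ∈ S, q ⬝ᵥ expVec κ = 0)
    (h2 : ∀ κ ∈ f.support, κ ∉ S → 0 < q ⬝ᵥ expVec κ) (x : Fin n → ℝ) (hx : ∀ j, x j ≠ 0)
    (hcrit : ∀ j, eval x (pderiv j (subPoly f S)) = 0) :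
    (0 : Fin n → ℝ) ∈ affineSpan ℝ (NewtonFace f q) := by
  by_contra h0
  obtain ⟨κ₀, hκ₀⟩ := hne
  have hin : ∀ κ ∈ S, expVec κ ∈ affineSpan ℝ (NewtonFace f q) := by
    intro κ hκ
    refine subset_affineSpan _ _ ⟨expVec_mem (hS hκ), ?_⟩
    rw [(face_of hS ⟨κ₀, hκ₀⟩ h1 h2).1]
    exact h1 κ hκ
  set W := (affineSpan ℝ (NewtonFace f q)).direction
  have hp : expVec κ₀ ∉ W := by
    intro hw
    apply h0
    have := AffineSubspace.vadd_mem_of_mem_direction (W.neg_mem hw) (hin κ₀ hκ₀)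
    simpa using this
  obtain ⟨φ, hφ1, hφ2⟩ := Submodule.exists_le_ker_of_notMem hp
  obtain ⟨p, hpφ⟩ : ∃ p : Fin n → ℝ, ∀ z, φ z = p ⬝ᵥ z := by
    refine ⟨fun j => φ (fun i => if j = i then 1 else 0), fun z => ?_⟩
    rw [LinearMap.pi_apply_eq_sum_univ φ z]
    simp only [dotProduct, smul_eq_mul, mul_comm]
  set c := φ (expVec κ₀) with hc
  have hpS : ∀ κ ∈ S, p ⬝ᵥ expVec κ = c := by
    intro κ hκ
    have h3 : expVec κ - expVec κ₀ ∈ W := AffineSubspace.vsub_mem_direction (hin κ hκ) (hin κ₀ hκ₀)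
    have h4 : φ (expVec κ - expVec κ₀) = 0 := hφ2 h3
    rw [map_sub, sub_eq_zero] at h4
    rw [← hpφ, h4]
  have hev : ∀ κ ∈ f.support, ∀ᶠ ε in 𝓝[>] (0 : ℝ), κ ∉ S →
      -ε < (q + (-ε / c) • p) ⬝ᵥ expVec κ := by
    intro κ hκ
    by_cases hs : κ ∈ S
    · exact Eventually.of_forall fun _ h => absurd hs h
    · have hcont : Continuous fun ε : ℝ => (q ⬝ᵥ expVec κ + (-ε / c) * (p ⬝ᵥ expVec κ)) + ε := by
        fun_prop
      have h3 := hcont.tendsto 0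
      simp only [neg_zero, zero_div, zero_mul, add_zero] at h3
      filter_upwards [(h3.mono_left nhdsWithin_le_nhds).eventually_const_lt (h2 κ hκ hs)] with ε hε _
      rw [add_dotProduct, smul_dotProduct, smul_eq_mul]
      linarith
  have hev2 := ((Finset.eventually_all f.support).2 hev).and self_mem_nhdsWithin
  obtain ⟨ε, hε, hεpos⟩ := hev2.exists
  have hfo := face_of (q := q + (-ε / c) • p) (c := -ε) hS ⟨κ₀, hκ₀⟩ (by
    intro κ hκ
    rw [add_dotProduct, smul_dotProduct, smul_eq_mul, h1 κ hκ, hpS κ hκ]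
    field_simp; ring) hε
  refine hnd (q + (-ε / c) • p) ?_ x hx ?_
  · rw [hfo.1]; simpa using hεpos
  · rw [hfo.2]; exact hcrit

/-- Some open orthant has infimum `m`. -/
lemma exists_orthant {n : ℕ} (f : MvPolynomial (Fin n) ℝ) (m : ℝ)
    (hm : IsGLB (Set.range fun x : Fin n → ℝ => eval x f) m) :
    ∃ s : Fin n → ℝ, (∀ j, s j ≠ 0) ∧
      IsGLB (Set.range fun u : Fin n → ℝ => eval (fun j => s j * Real.exp (u j)) f) m := by
  by_contra hcon
  push Not at hcon
  let sg : (Fin n → Bool) → Fin n → ℝ := fun s j => if s j then 1 else -1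
  have hsg : ∀ s j, sg s j ≠ 0 := by
    intro s j; simp only [sg]; split_ifs <;> norm_num
  have h1 : ∀ s : Fin n → Bool, ∃ a, m < a ∧ ∀ u : Fin n → ℝ,
      a ≤ eval (fun j => sg s j * Real.exp (u j)) f := by
    intro s
    by_contra hno
    push Not at hno
    apply hcon (sg s) (hsg s)
    refine ⟨?_, ?_⟩
    · rintro _ ⟨u, rfl⟩; exact hm.1 ⟨_, rfl⟩
    · intro a ha
      by_contra hlt
      push Not at hlt
      obtain ⟨u, hu⟩ := hno a hlt
      exact absurd (ha ⟨u, rfl⟩) (not_le.2 hu)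
  choose a ha1 ha2 using h1
  obtain ⟨s₀, hs₀⟩ := Finite.exists_min a
  have hdense : Dense (Set.pi univ fun _ : Fin n => ({0}ᶜ : Set ℝ)) :=
    dense_pi _ fun _ _ => dense_compl_singleton 0
  have hcont : Continuous fun x : Fin n → ℝ => eval x f := MvPolynomial.continuous_eval f
  have hclosed : IsClosed {x : Fin n → ℝ | a s₀ ≤ eval x f} := isClosed_le continuous_const hcont
  have hall : ∀ x : Fin n → ℝ, a s₀ ≤ eval x f := by
    intro x
    have : closure (Set.pi univ fun _ : Fin n => ({0}ᶜ : Set ℝ)) ⊆ {x | a s₀ ≤ eval x f} := by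
      refine closure_minimal ?_ hclosed
      intro y hy
      have hy' : ∀ j, y j ≠ 0 := fun j => hy j (mem_univ j)
      have := ha2 (fun j => decide (0 < y j)) (fun j => Real.log |y j|)
      have e1 : (fun j => sg (fun j => decide (0 < y j)) j * Real.exp (Real.log |y j|)) = y := by
        ext j
        rw [Real.exp_log (abs_pos.2 (hy' j))]
        by_cases hj : 0 < y j
        · simp [sg, hj, abs_of_pos hj]
        · simp [sg, hj, abs_of_nonpos (not_lt.1 hj)]
      rw [e1] at this
      exact (hs₀ _).trans this
    exact this (hdense.closure_eq ▸ mem_univ x)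
  have : a s₀ ≤ m := hm.2 (by rintro _ ⟨x, rfl⟩; exact hall x)
  exact absurd (ha1 s₀) (not_lt.2 this)

/-- If the exponents are unbounded above along a Palais-Smale sequence, nondegeneracy fails. -/
lemma unbounded_false {n : ℕ} (f : MvPolynomial (Fin n) ℝ) (hnd : NondegenerateAtInfinity f)
    (s : Fin n → ℝ) (hs : ∀ j, s j ≠ 0) (u : ℕ → Fin n → ℝ) (κ₀ : Fin n →₀ ℕ)
    (hκ₀ : κ₀ ∈ f.support)
    (hmax : ∀ k, ∀ κ ∈ f.support, u k ⬝ᵥ expVec κ ≤ u k ⬝ᵥ expVec κ₀)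
    (htop : Tendsto (fun k => u k ⬝ᵥ expVec κ₀) atTop atTop)
    (hgrad : ∀ j, Tendsto (fun k => ∑ κ ∈ f.support,
      ((κ j : ℝ) * (f.coeff κ * ∏ j, s j ^ κ j)) * Real.exp (u k ⬝ᵥ expVec κ)) atTop (𝓝 0)) :
    False := by
  obtain ⟨φ, hφ, S, hST, v, w, hsum, hw0, hwb, hlim⟩ :=
    extract f.support (fun κ => expVec κ - expVec κ₀) u 0 (by
      intro k κ hκ
      rw [dotProduct_sub]
      linarith [hmax k κ hκ])
  have hdot : ∀ a : Fin n → ℝ, Continuous fun z : Fin n → ℝ => z ⬝ᵥ a := by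
    intro a; unfold dotProduct; fun_prop
  have hκS : κ₀ ∈ S := by
    by_contra hn
    have := hwb κ₀ hκ₀ hn
    simp only [sub_self, dotProduct_zero] at this
    exact not_tendsto_const_atBot _ _ this
  have htop' : Tendsto (fun k => u (φ k) ⬝ᵥ expVec κ₀) atTop atTop := htop.comp hφ.tendsto_atTop
  have hwtop : Tendsto (fun k => w k ⬝ᵥ expVec κ₀) atTop atTop := by
    have h3 := (((hdot (expVec κ₀)).tendsto _).comp hlim).neg
    refine (htop'.atTop_add h3).congr fun k => ?_
    simp only [Function.comp, sub_dotProduct]; ring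
  have hev : ∀ κ ∈ f.support, ∀ᶠ k in atTop, κ ∉ S → w k ⬝ᵥ (expVec κ - expVec κ₀) < 0 := by
    intro κ hκ
    by_cases hs : κ ∈ S
    · exact Eventually.of_forall fun _ h => absurd hs h
    · filter_upwards [(hwb κ hκ hs).eventually_lt_atBot 0] with k hk _ using hk
  obtain ⟨k, hk1, hk2⟩ := (((Finset.eventually_all f.support).2 hev).and
    (hwtop.eventually_gt_atTop 0)).exists
  have hfo := face_of (q := -w k) (c := -(w k ⬝ᵥ expVec κ₀)) hST ⟨κ₀, hκS⟩ (by
    intro κ hκ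
    have := hw0 κ hκ k
    rw [dotProduct_sub] at this
    rw [neg_dotProduct]; linarith) (by
    intro κ hκ hn
    have := hk1 κ hκ hn
    rw [dotProduct_sub] at this
    rw [neg_dotProduct]; linarith)
  refine hnd (-w k) (by rw [hfo.1]; linarith) (fun j => s j * Real.exp (v j))
    (fun j => mul_ne_zero (hs j) (Real.exp_pos _).ne') ?_
  intro j
  rw [hfo.2]
  have hx : s j * Real.exp (v j) ≠ 0 := mul_ne_zero (hs j) (Real.exp_pos _).ne'
  refine (mul_eq_zero.1 ?_).resolve_left hx
  rw [eval_pderiv_subPoly]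
  have hl1 := hsum fun κ => (κ j : ℝ) * (f.coeff κ * ∏ j, s j ^ κ j)
  have hl2 : Tendsto (fun k => ∑ κ ∈ f.support, ((κ j : ℝ) * (f.coeff κ * ∏ j, s j ^ κ j)) *
      Real.exp (u (φ k) ⬝ᵥ (expVec κ - expVec κ₀))) atTop (𝓝 0) := by
    have h3 := (Real.tendsto_exp_neg_atTop_nhds_zero.comp htop').mul
      ((hgrad j).comp hφ.tendsto_atTop)
    rw [mul_zero] at h3
    refine h3.congr fun k => ?_
    simp only [Function.comp]
    rw [Finset.mul_sum]
    refine Finset.sum_congr rfl fun κ _ => ?_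
    rw [dotProduct_sub, sub_eq_add_neg, Real.exp_add]; ring
  have h4 := tendsto_nhds_unique hl1 hl2
  have h5 : ∑ κ ∈ S, ((κ j : ℝ) * (f.coeff κ * ∏ j, s j ^ κ j)) * Real.exp (v ⬝ᵥ expVec κ)
      = Real.exp (v ⬝ᵥ expVec κ₀) * ∑ κ ∈ S, ((κ j : ℝ) * (f.coeff κ * ∏ j, s j ^ κ j)) *
        Real.exp (v ⬝ᵥ (expVec κ - expVec κ₀)) := by
    rw [Finset.mul_sum]
    refine Finset.sum_congr rfl fun κ _ => ?_
    have : Real.exp (v ⬝ᵥ expVec κ)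
        = Real.exp (v ⬝ᵥ expVec κ₀) * Real.exp (v ⬝ᵥ (expVec κ - expVec κ₀)) := by
      rw [← Real.exp_add, dotProduct_sub]; congr 1; ring
    rw [this]; ring
  rw [h5, h4, mul_zero]

/-- The bounded case: the infimum is attained or is a critical value of a bad face. -/
lemma bounded_mem {n : ℕ} (f : MvPolynomial (Fin n) ℝ) (hnd : NondegenerateAtInfinity f)
    (m : ℝ) (hm : ∀ x, m ≤ eval x f)
    (s : Fin n → ℝ) (hs : ∀ j, s j ≠ 0) (u : ℕ → Fin n → ℝ) (C : ℝ)
    (hC : ∀ k, ∀ κ ∈ f.support, u k ⬝ᵥ expVec κ ≤ C)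
    (hval : Tendsto (fun k => ∑ κ ∈ f.support,
      (f.coeff κ * ∏ j, s j ^ κ j) * Real.exp (u k ⬝ᵥ expVec κ)) atTop (𝓝 m)) :
    m ∈ K0 f ∪ SigmaInfty' f := by
  obtain ⟨φ, hφ, S, hST, v, w, hsum, hw0, hwb, hlim⟩ := extract f.support expVec u C hC
  have hatt : ∀ x, eval x f = m → m ∈ K0 f ∪ SigmaInfty' f := by
    intro x hx
    exact Or.inl ⟨x, crit_of_min f x (fun y => hx ▸ hm y), hx⟩
  set x : Fin n → ℝ := fun j => s j * Real.exp (v j) with hx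
  have hx0 : ∀ j, x j ≠ 0 := fun j => mul_ne_zero (hs j) (Real.exp_pos _).ne'
  have hxS : eval x (subPoly f S) = m := by
    rw [eval_subPoly]
    exact tendsto_nhds_unique (hsum _) (hval.comp hφ.tendsto_atTop)
  have hev : ∀ κ ∈ f.support, ∀ᶠ k in atTop, κ ∉ S → w k ⬝ᵥ expVec κ < 0 := by
    intro κ hκ
    by_cases hs : κ ∈ S
    · exact Eventually.of_forall fun _ h => absurd hs h
    · filter_upwards [(hwb κ hκ hs).eventually_lt_atBot 0] with k hk _ using hk
  obtain ⟨k, hk1⟩ := ((Finset.eventually_all f.support).2 hev).exists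
  set q := -w k with hq
  have h1 : ∀ κ ∈ S, q ⬝ᵥ expVec κ = 0 := by
    intro κ hκ
    rw [hq, neg_dotProduct, hw0 κ hκ k, neg_zero]
  have h2 : ∀ κ ∈ f.support, κ ∉ S → 0 < q ⬝ᵥ expVec κ := by
    intro κ hκ hn
    have := hk1 κ hκ hn
    rw [hq, neg_dotProduct]; linarith
  have hmin : ∀ y, eval x (subPoly f S) ≤ eval y (subPoly f S) := fun y =>
    hxS ▸ le_sub f m hm q S hST h1 h2 y
  have hcrit := crit_of_min _ x hmin
  by_cases hpos : ∀ j, 0 ≤ q j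
  · -- `f_S` is the restriction of `f` to a coordinate subspace
    refine hatt (fun j => if q j = 0 then x j else 0) ?_
    rw [← hxS]
    conv_lhs => rw [← subPoly_support f]
    unfold subPoly
    rw [map_sum, map_sum, ← Finset.sum_subset hST]
    · refine Finset.sum_congr rfl fun κ hκ => ?_
      rw [eval_monomial, eval_monomial, Finsupp.prod_fintype _ _ (by simp),
        Finsupp.prod_fintype _ _ (by simp)]
      congr 1
      refine Finset.prod_congr rfl fun j _ => ?_
      split_ifs with hj
      · rfl
      · have h3 := (Finset.sum_eq_zero_iff_of_nonneg (fun i _ =>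
          mul_nonneg (hpos i) (Nat.cast_nonneg (κ i)))).1 (h1 κ hκ) j (Finset.mem_univ j)
        have h4 : κ j = 0 := by
          rcases mul_eq_zero.1 h3 with h | h
          · exact absurd h hj
          · exact_mod_cast h
        rw [h4, pow_zero, pow_zero]
    · intro κ hκ hn
      rw [eval_monomial, Finsupp.prod_fintype _ _ (by simp)]
      have h3 := h2 κ hκ hn
      obtain ⟨j, -, hj⟩ := Finset.exists_ne_zero_of_sum_ne_zero (show ∑ j, q j * expVec κ j ≠ 0 from h3.ne')
      have hqj : q j ≠ 0 := left_ne_zero_of_mul hj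
      have hκj : κ j ≠ 0 := by
        have := right_ne_zero_of_mul hj
        simpa [expVec] using this
      rw [Finset.prod_eq_zero (Finset.mem_univ j) (by simp [hqj, hκj]), mul_zero]
  push Not at hpos
  obtain ⟨i, hi⟩ := hpos
  by_cases hneg : ∀ j, q j ≤ 0
  · have hSs : S = f.support := by
      refine Finset.Subset.antisymm hST fun κ hκ => ?_
      by_contra hn
      have h3 := h2 κ hκ hn
      have h4 : q ⬝ᵥ expVec κ ≤ 0 := Finset.sum_nonpos fun j _ =>
        mul_nonpos_of_nonpos_of_nonneg (hneg j) (Nat.cast_nonneg _)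
      linarith
    rw [hSs, subPoly_support] at hxS
    exact hatt x hxS
  push Not at hneg
  obtain ⟨j, hj⟩ := hneg
  by_cases hne : S.Nonempty
  · refine Or.inr ⟨NewtonFace f q, ⟨⟨q, rfl⟩, ?_, q, ⟨i, j, mul_neg_of_neg_of_pos hi hj⟩, ?_⟩,
      x, hx0, ?_, ?_⟩
    · exact zero_mem_span f hnd q S hST hne h1 h2 x hx0 hcrit
    · ext z
      simp only [NewtonFace, (face_of hST hne h1 h2).1, Set.mem_inter_iff, Set.mem_ofPred_eq]
      exact and_comm
    · rw [(face_of hST hne h1 h2).2]; exact hcrit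
    · rw [(face_of hST hne h1 h2).2]; exact hxS
  · -- `S` empty: the infimum is `0 = f 0`
    rw [Finset.not_nonempty_iff_eq_empty] at hne
    subst hne
    have hm0 : m = 0 := by rw [← hxS]; simp [subPoly]
    refine hatt 0 ?_
    rw [hm0, MvPolynomial.eval_zero, constantCoeff_eq]
    by_contra hc
    have := h2 0 (mem_support_iff.2 hc) (Finset.notMem_empty _)
    simp [expVec, dotProduct] at this

lemma inf_mem {n : ℕ} (f : MvPolynomial (Fin n) ℝ) (hne : f.support.Nonempty)
    (hnd : NondegenerateAtInfinity f) (m : ℝ)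
    (hm : IsGLB (Set.range fun x : Fin n → ℝ => eval x f) m) :
    m ∈ K0 f ∪ SigmaInfty' f := by
  obtain ⟨s, hs, hsm⟩ := exists_orthant f m hm
  have hF : (fun u : Fin n → ℝ => eval (fun j => s j * Real.exp (u j)) f) = fun u =>
      ∑ κ ∈ f.support, (f.coeff κ * ∏ j, s j ^ κ j) * Real.exp (u ⬝ᵥ expVec κ) := by
    ext u
    rw [← eval_subPoly, subPoly_support]
  rw [hF] at hsm
  obtain ⟨u, hu1, hu2⟩ := exists_seq f.support expVec _ m hsm
  by_cases hb : ∃ C : ℝ, ∃ᶠ k in atTop, ∀ κ ∈ f.support, u k ⬝ᵥ expVec κ ≤ C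
  · obtain ⟨C, hC⟩ := hb
    obtain ⟨φ, hφ, hφC⟩ := extraction_of_frequently_atTop hC
    exact bounded_mem f hnd m (fun x => hm.1 ⟨x, rfl⟩) s hs (u ∘ φ) C hφC
      (hu1.comp hφ.tendsto_atTop)
  · exfalso
    push Not at hb
    have hmx : ∀ k, ∃ κ₀ ∈ f.support, ∀ κ ∈ f.support, u k ⬝ᵥ expVec κ ≤ u k ⬝ᵥ expVec κ₀ :=
      fun k => Finset.exists_max_image _ _ hne
    have hfr : ∃ κ₀ ∈ f.support, ∃ᶠ k in atTop, ∀ κ ∈ f.support,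
        u k ⬝ᵥ expVec κ ≤ u k ⬝ᵥ expVec κ₀ := by
      by_contra hno
      simp only [not_exists, not_and, not_frequently] at hno
      obtain ⟨k, hk⟩ := ((Finset.eventually_all f.support).2 hno).exists
      obtain ⟨κ₀, h, h'⟩ := hmx k
      exact hk κ₀ h h'
    obtain ⟨κ₀, hκ₀, hfr⟩ := hfr
    obtain ⟨φ, hφ, hφm⟩ := extraction_of_frequently_atTop hfr
    refine unbounded_false f hnd s hs (u ∘ φ) κ₀ hκ₀ hφm ?_ ?_
    · rw [tendsto_atTop]
      intro C
      filter_upwards [hφ.tendsto_atTop.eventually (hb C)] with k hk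
      obtain ⟨κ, hκ, hlt⟩ := hk
      exact hlt.le.trans (hφm k κ hκ)
    · intro j
      exact (hu2 j).comp hφ.tendsto_atTop

/-- **Theorem 4.2.** The optimal value is the smallest element of `K₀(f₀) ∪ Σ∞(f₀)` and of
`K₀(f₀) ∪ Σ∞'(f₀)`. -/
theorem optimal_value_eq_min_critical {n : ℕ} (f₀ : MvPolynomial (Fin n) ℝ)
    (hnc : ∃ x y : Fin n → ℝ, eval x f₀ ≠ eval y f₀)
    (hbdd : BddBelow (Set.range fun x : Fin n → ℝ => eval x f₀))
    (hnd : NondegenerateAtInfinity f₀)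
    (fstar : ℝ) (hfstar : fstar = sInf (Set.range fun x : Fin n → ℝ => eval x f₀)) :
    IsLeast (K0 f₀ ∪ SigmaInfty f₀) fstar ∧ IsLeast (K0 f₀ ∪ SigmaInfty' f₀) fstar := by
  have hne : f₀.support.Nonempty := by
    rw [Finset.nonempty_iff_ne_empty]
    intro h
    rw [MvPolynomial.support_eq_empty] at h
    obtain ⟨x, y, hxy⟩ := hnc
    simp [h] at hxy
  have hglb : IsGLB (Set.range fun x : Fin n → ℝ => eval x f₀) fstar := by
    rw [hfstar]
    exact isGLB_csInf (Set.range_nonempty _) hbdd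
  have hm : ∀ x, fstar ≤ eval x f₀ := fun x => hglb.1 ⟨x, rfl⟩
  have hmem := inf_mem f₀ hne hnd fstar hglb
  have hsub : SigmaInfty' f₀ ⊆ SigmaInfty f₀ := by
    rintro c ⟨Δ, hΔ, x, -, h⟩
    exact ⟨Δ, hΔ, x, h⟩
  have hlow : fstar ∈ lowerBounds (K0 f₀ ∪ SigmaInfty f₀) := by
    rintro c (⟨x, -, rfl⟩ | ⟨Δ, hΔ, x, -, rfl⟩)
    · exact hm x
    · exact bad_le f₀ fstar hm Δ hΔ x
  exact ⟨⟨Set.union_subset_union_right _ hsub hmem, hlow⟩,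
    ⟨hmem, fun c hc => hlow (Set.union_subset_union_right _ hsub hc)⟩⟩
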